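/- arXiv:1910.07739 — 2 statements merged into one kernel-verified Lean document; each statement's English description precedes it below -/
import Mathlib

section
/- Let p be a prime number and n ≥ 1 an integer with p ∣ n. If F ∈ ℚ_p[X] is a monic irreducible factor of the n-th cyclotomic polynomial Φ_n over ℚ_p, then the polynomial F(X^p) (the expansion of F along X ↦ X^p) is irreducible in ℚ_p[X] and divides the (np)-th cyclotomic polynomial Φ_{np}. -/
open Polynomial

/-!
A root `x` of `F` is a primitive `n`-th root of unity, so `F(X ^ p)` is irreducible as soon as `x`
is not a `p`-th power in `K(x)`. As `p ∣ n`, a `p`-th root of `x` would be a primitive `np`-th root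
of unity. Write `n = p ^ (k + 1) * m` with `p ∤ m`. The extension `K(ζ_m)` is unramified at `p`,
since the derivative of `X ^ m - 1` at `ζ_m` is prime to `p`. So no prime of `K(ζ_m)` over `p`
contains `p` in its square and, by Eisenstein's criterion, every `Φ_{p ^ j}` remains irreducible
over `K(ζ_m)`. Hence `K(ζ_n)` has degree `φ(p ^ (k + 1))` over `K(ζ_m)`, which is too small for it
to contain a primitive root of unity of order `p ^ (k + 2)`.
-/

open scoped IntermediateField

section Eisenstein

variable {A : Type*} [CommRing A] {p : ℕ} [hp : Fact p.Prime] {P : Ideal A}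

theorem natCast_mem_iff_prime_dvd (hP : P ≠ ⊤) (hpP : (p : A) ∈ P) {m : ℕ} :
    (m : A) ∈ P ↔ p ∣ m := by
  refine ⟨fun hmP ↦ ?_, fun ⟨c, hc⟩ ↦ by simpa [hc] using P.mul_mem_right _ hpP⟩
  by_contra hpm
  obtain ⟨u, v, huv⟩ := (hp.out.coprime_iff_not_dvd.2 hpm).cast (R := A)
  exact (Ideal.ne_top_iff_one P).1 hP
    (huv ▸ P.add_mem (P.mul_mem_left u hpP) (P.mul_mem_left v hmP))

theorem charZero_of_natCast_notMem_sq [NoZeroDivisors A] (hpP : (p : A) ∈ P)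
    (hpP2 : (p : A) ∉ P ^ 2) : CharZero A := by
  have hP : P ≠ ⊤ := by rintro rfl; simp [Ideal.top_pow] at hpP2
  refine charZero_of_inj_zero fun n hn ↦ ?_
  by_contra hn0
  obtain ⟨k, m, hpm, rfl⟩ := Nat.exists_eq_pow_mul_and_not_dvd hn0 p hp.out.ne_one
  rw [Nat.cast_mul, Nat.cast_pow, mul_eq_zero] at hn
  rcases hn with hpk | hm
  · exact hpP2 (eq_zero_of_pow_eq_zero hpk ▸ zero_mem _)
  · exact hpm ((natCast_mem_iff_prime_dvd hP hpP).1 (hm ▸ zero_mem _))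

theorem cyclotomic_prime_pow_comp_X_add_C_one_isEisensteinAt (hpP : (p : A) ∈ P)
    (hpP2 : (p : A) ∉ P ^ 2) (k : ℕ) :
    ((cyclotomic (p ^ (k + 1)) A).comp (X + C 1)).IsEisensteinAt P := by
  have hP : P ≠ ⊤ := by rintro rfl; simp [Ideal.top_pow] at hpP2
  have hle : (Ideal.span {(p : ℤ)}).map (Int.castRingHom A) ≤ P := by
    simpa [Ideal.map_span, Ideal.span_le] using hpP
  have hweak := (cyclotomic_prime_pow_comp_X_add_one_isEisensteinAt p k).isWeaklyEisensteinAt.map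
    (Int.castRingHom A)
  rw [← C_1, Polynomial.map_comp, map_cyclotomic, Polynomial.map_add, map_X, map_C, map_one]
    at hweak
  refine ((cyclotomic.monic _ A).comp_X_add_C 1).isEisensteinAt_of_mem_of_notMem hP
    (fun hn ↦ hle (hweak.mem hn)) ?_
  simpa [coeff_zero_eq_eval_zero, eval_comp, eval_one_cyclotomic_prime_pow] using hpP2

theorem irreducible_cyclotomic_prime_pow_of_notMem_sq [IsDomain A] [IsIntegrallyClosed A]
    [P.IsPrime] (K : Type*) [Field K] [Algebra A K] [IsFractionRing A K] (hpP : (p : A) ∈ P)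
    (hpP2 : (p : A) ∉ P ^ 2) (k : ℕ) : Irreducible (cyclotomic (p ^ (k + 1)) K) := by
  have hmonic := cyclotomic.monic (p ^ (k + 1)) A
  have hdeg : 0 < ((cyclotomic (p ^ (k + 1)) A).comp (X + C 1)).natDegree := by
    rw [natDegree_comp, natDegree_X_add_C, natDegree_cyclotomic, mul_one]
    exact Nat.totient_pos.2 (pow_pos hp.out.pos _)
  have hshift : Irreducible ((cyclotomic (p ^ (k + 1)) A).comp (X + C 1)) :=
    (cyclotomic_prime_pow_comp_X_add_C_one_isEisensteinAt hpP hpP2 k).irreducible inferInstance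
      (hmonic.comp_X_add_C 1).isPrimitive hdeg
  rw [← map_cyclotomic (p ^ (k + 1)) (algebraMap A K),
    ← hmonic.irreducible_iff_irreducible_map_fraction_map]
  exact (MulEquiv.irreducible_iff (algEquivAevalXAddC (1 : A))).1 hshift

end Eisenstein

section Unramified

variable {A B : Type*} [CommRing A] [IsDedekindDomain A] [CommRing B] [IsDedekindDomain B]
  [Algebra A B]

theorem algebraMap_notMem_sq_of_isUnramifiedAt [Module.IsTorsionFree A B]
    [Algebra.EssFiniteType A B] {P : Ideal A} (Q : Ideal B) [Q.IsPrime] [Q.LiesOver P]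
    [Algebra.IsUnramifiedAt A Q] {x : A} (hxP : x ∈ P) (hxP2 : x ∉ P ^ 2) :
    algebraMap A B x ∉ Q ^ 2 := by
  intro hxQ
  have hP0 : P ≠ ⊥ := by rintro rfl; exact hxP2 (by simp_all)
  have hP : P.IsPrime := Ideal.over_def Q P ▸ inferInstance
  have hmap : P.map (algebraMap A B) ≤ Q := Ideal.map_le_iff_le_comap.2 (Ideal.over_def Q P).le
  have hPeq : Ideal.span {x} ⊔ P ^ 2 = P := by
    refine (Ideal.eq_prime_pow_of_succ_lt_of_le (i := 1) hP0 ?_ ?_).trans (pow_one P)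
    · exact right_lt_sup.2 (by simpa using hxP2)
    · simpa using ⟨hxP, Ideal.pow_le_self two_ne_zero⟩
  have he : P.ramificationIdx' Q = 1 :=
    (Ideal.ramificationIdx'_eq_ramificationIdx P Q hP0).trans
      Ideal.ramificationIdx_eq_one_of_isUnramifiedAt
  refine (Ideal.ramificationIdx'_ne_one_iff hmap).2 ?_ he
  rw [← hPeq, Ideal.map_sup, Ideal.map_pow, Ideal.map_span, Set.image_singleton, sup_le_iff,
    Ideal.span_singleton_le_iff_mem]
  exact ⟨hxQ, Ideal.pow_right_mono hmap 2⟩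

variable (K L : Type*) [Field K] [Field L] [Algebra A K] [IsFractionRing A K] [Algebra K L]
  [Algebra A L] [IsScalarTower A K L] [Algebra B L] [IsScalarTower A B L] [IsIntegralClosure B A L]

theorem isUnramifiedAt_of_aeval_derivative_minpoly_notMem [FiniteDimensional K L]
    [Algebra.IsSeparable K L] {x : B} (hx : Algebra.adjoin K {algebraMap B L x} = ⊤)
    (Q : Ideal B) [Q.IsPrime] (hQ : aeval x (derivative (minpoly A x)) ∉ Q) :
    Algebra.IsUnramifiedAt A Q := by
  have : IsFractionRing B L := IsIntegralClosure.isFractionRing_of_finite_extension A K L B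
  have : Module.Finite A B := IsIntegralClosure.finite A K L B
  have : Module.IsTorsionFree A L := .trans_faithfulSMul A K L
  have : Module.IsTorsionFree A B := IsIntegralClosure.isTorsionFree A L
  let := FractionRing.liftAlgebra A (FractionRing B)
  have : Algebra.IsSeparable (FractionRing A) (FractionRing B) :=
    .of_equiv_equiv (FractionRing.algEquiv A K).symm.toRingEquiv
      (FractionRing.algEquiv B L).symm.toRingEquiv <| by
        ext
        exact IsFractionRing.algEquiv_commutes (FractionRing.algEquiv A K).symm
          (FractionRing.algEquiv B L).symm _
  refine not_dvd_differentIdeal_iff.1 fun hdvd ↦ hQ ?_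
  exact Ideal.dvd_iff_le.1 hdvd (aeval_derivative_mem_differentIdeal A K L x hx)

theorem isUnramifiedAt_of_isCyclotomicExtension (m : ℕ) [IsCyclotomicExtension {m} K L]
    (Q : Ideal B) [Q.IsPrime] (hm : (m : B) ∉ Q) : Algebra.IsUnramifiedAt A Q := by
  have : NeZero m := ⟨by rintro rfl; simp at hm⟩
  have := IsCyclotomicExtension.finiteDimensional {m} K L
  have := IsCyclotomicExtension.isSeparable {m} K L
  have hζ := IsCyclotomicExtension.zeta_spec m K L
  obtain ⟨x, hxζ⟩ := IsIntegralClosure.isIntegral_iff (A := B) |>.1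
    (hζ.isIntegral (NeZero.pos m) |>.tower_top (A := A))
  have hinj := IsIntegralClosure.algebraMap_injective B A L
  have hxm : x ^ m = 1 := hinj (by simp [hxζ, hζ.pow_eq_one])
  have hint : IsIntegral A x := IsIntegralClosure.isIntegral A L x
  refine isUnramifiedAt_of_aeval_derivative_minpoly_notMem K L (x := x) ?_ Q fun hQ ↦ ?_
  · rw [hxζ, IsCyclotomicExtension.adjoin_primitive_root_eq_top hζ]
  have : Module.IsTorsionFree A L := .trans_faithfulSMul A K L
  have : Module.IsTorsionFree A B := IsIntegralClosure.isTorsionFree A L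
  obtain ⟨g, hg⟩ := minpoly.isIntegrallyClosed_dvd hint (p := X ^ m - 1) (by simp [hxm])
  have hderiv : (m : B) * x ^ (m - 1) = aeval x (derivative (minpoly A x)) * aeval x g := by
    simpa [derivative_X_pow] using congrArg (fun q ↦ aeval x (derivative q)) hg
  have hunit : IsUnit (x ^ (m - 1)) := (IsUnit.of_pow_eq_one hxm (NeZero.ne m)).pow _
  exact hm ((Q.mul_unit_mem_iff_mem hunit).1 (hderiv ▸ Q.mul_mem_right _ hQ))

end Unramified

section RootsOfUnity

theorem isPrimitiveRoot_mul_of_pow_of_dvd {M : Type*} [CommMonoid M] {ζ : M} {d n : ℕ}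
    (hd : d ≠ 0) (hdn : d ∣ n) (hζ : IsPrimitiveRoot (ζ ^ d) n) : IsPrimitiveRoot ζ (n * d) := by
  have hdζ : d ∣ orderOf ζ := hdn.trans (hζ.eq_orderOf ▸ orderOf_pow_dvd d)
  rw [IsPrimitiveRoot.iff_orderOf, hζ.eq_orderOf, orderOf_pow' ζ hd, Nat.gcd_eq_right hdζ,
    Nat.div_mul_cancel hdζ]

theorem isCyclotomicExtension_adjoin_simple (K : Type*) {E : Type*} [Field K] [Field E]
    [Algebra K E] {n : ℕ} [NeZero n] {ζ : E} (hζ : IsPrimitiveRoot ζ n) :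
    IsCyclotomicExtension {n} K K⟮ζ⟯ := by
  change IsCyclotomicExtension {n} K K⟮ζ⟯.toSubalgebra
  rw [IntermediateField.adjoin_simple_toSubalgebra_of_isAlgebraic
    (hζ.isIntegral (NeZero.pos n)).tower_top.isAlgebraic]
  exact hζ.adjoin_isCyclotomicExtension K

theorem isCyclotomicExtension_of_isCyclotomicExtension_lcm (A : Type*) {R B : Type*} [CommRing A]
    [CommRing R] [CommRing B] [IsDomain B] [Algebra A R] [Algebra R B] [Algebra A B]
    [IsScalarTower A R B] {a b : ℕ} [NeZero a] [NeZero b] [IsCyclotomicExtension {a.lcm b} A B]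
    {ζ : R} (hζ : IsPrimitiveRoot (algebraMap R B ζ) a) : IsCyclotomicExtension {b} R B := by
  have : NeZero (a.lcm b) := ⟨Nat.lcm_ne_zero (NeZero.ne a) (NeZero.ne b)⟩
  obtain ⟨ξ, hξ⟩ : ∃ ξ : B, IsPrimitiveRoot ξ (a.lcm b) :=
    IsCyclotomicExtension.exists_isPrimitiveRoot A B (Set.mem_singleton _) (NeZero.ne _)
  obtain ⟨c, hc⟩ := Nat.dvd_lcm_right a b
  have hη : IsPrimitiveRoot (ξ ^ c) b := hξ.pow (NeZero.pos _) (hc.trans (mul_comm b c))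
  refine (IsCyclotomicExtension.iff_singleton b R B).2 ⟨⟨_, hη⟩, fun x ↦ ?_⟩
  have hle : Algebra.adjoin A {algebraMap R B ζ, ξ ^ c} ≤
      (Algebra.adjoin R {y : B | y ^ b = 1}).restrictScalars A := by
    have hmem : ξ ^ c ∈ Algebra.adjoin R {y : B | y ^ b = 1} :=
      Algebra.subset_adjoin hη.pow_eq_one
    simp [Algebra.adjoin_le_iff, Set.insert_subset_iff, hmem]
  rw [hζ.adjoin_pair_eq A hη (NeZero.ne a) (NeZero.ne b) hξ,
    IsCyclotomicExtension.adjoin_primitive_root_eq_top hξ] at hle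
  exact (Subalgebra.mem_restrictScalars A).1 (hle Algebra.mem_top)

end RootsOfUnity

section CyclotomicTower

variable {A : Type*} [CommRing A] [IsDedekindDomain A] {p : ℕ} [hp : Fact p.Prime]
  {P : Ideal A} [P.IsPrime] (K : Type*) [Field K] [Algebra A K] [IsFractionRing A K]

theorem irreducible_cyclotomic_prime_pow_of_isCyclotomicExtension (hpP : (p : A) ∈ P)
    (hpP2 : (p : A) ∉ P ^ 2) (L : Type*) [Field L] [Algebra K L] {m : ℕ}
    [IsCyclotomicExtension {m} K L] (hpm : ¬p ∣ m) (k : ℕ) :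
    Irreducible (cyclotomic (p ^ (k + 1)) L) := by
  let : Algebra A L := ((algebraMap K L).comp (algebraMap A K)).toAlgebra
  have : IsScalarTower A K L := .of_algebraMap_eq fun _ ↦ rfl
  have := IsCyclotomicExtension.finiteDimensional {m} K L
  have := IsCyclotomicExtension.isSeparable {m} K L
  let B := integralClosure A L
  have : IsDedekindDomain B := integralClosure.isDedekindDomain A K L
  have : IsFractionRing B L := integralClosure.isFractionRing_of_finite_extension K L
  have : Module.Finite A B := IsIntegralClosure.finite A K L B
  have : Module.IsTorsionFree A L := .trans_faithfulSMul A K L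
  obtain ⟨⟨Q, hQ, hQP⟩⟩ := P.nonempty_primesOver (S := B)
  have hpQ : (p : B) ∈ Q := by
    simpa using (Ideal.mem_of_liesOver Q P (p : A)).1 hpP
  have hmQ : (m : B) ∉ Q := mt (natCast_mem_iff_prime_dvd Ideal.IsPrime.ne_top' hpQ).1 hpm
  have := isUnramifiedAt_of_isCyclotomicExtension (A := A) K L m Q hmQ
  have hpQ2 : (p : B) ∉ Q ^ 2 := by
    simpa using algebraMap_notMem_sq_of_isUnramifiedAt Q hpP hpP2
  exact irreducible_cyclotomic_prime_pow_of_notMem_sq L hpQ hpQ2 k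

theorem not_isPrimitiveRoot_mul_of_isCyclotomicExtension (hpP : (p : A) ∈ P)
    (hpP2 : (p : A) ∉ P ^ 2) {E : Type*} [Field E] [Algebra K E] {n : ℕ} [NeZero n]
    [hE : IsCyclotomicExtension {n} K E] (hpn : p ∣ n) (ζ : E) :
    ¬IsPrimitiveRoot ζ (n * p) := by
  intro hζ
  obtain ⟨k, m, hpm, hn⟩ := Nat.exists_eq_pow_mul_and_not_dvd (NeZero.ne n) p hp.out.ne_one
  obtain ⟨k, rfl⟩ : ∃ l, k = l + 1 := Nat.exists_eq_succ_of_ne_zero fun hk ↦ hpm <| by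
    simpa [hn, hk] using hpn
  have : NeZero m := ⟨by rintro rfl; simp at hpm⟩
  have hlcm : m.lcm (p ^ (k + 1)) = n := by
    rw [hn, mul_comm, ((hp.out.coprime_iff_not_dvd.2 hpm).symm.pow_right _).lcm_eq_mul]
  have hω : IsPrimitiveRoot (ζ ^ p ^ (k + 2)) m :=
    hζ.pow (Nat.mul_pos (NeZero.pos n) hp.out.pos) (by rw [hn]; ring)
  have hθ : IsPrimitiveRoot (ζ ^ m) (p ^ (k + 2)) :=
    hζ.pow (Nat.mul_pos (NeZero.pos n) hp.out.pos) (by rw [hn]; ring)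
  have := IsCyclotomicExtension.finiteDimensional {n} K E
  let F := K⟮ζ ^ p ^ (k + 2)⟯
  have : IsCyclotomicExtension {m} K F := hω.intermediateField_adjoin_isCyclotomicExtension K
  have hirr := irreducible_cyclotomic_prime_pow_of_isCyclotomicExtension K hpP hpP2 F hpm
  have : IsCyclotomicExtension {m.lcm (p ^ (k + 1))} K E := hlcm ▸ hE
  have : IsCyclotomicExtension {p ^ (k + 1)} F E :=
    isCyclotomicExtension_of_isCyclotomicExtension_lcm K
      (ζ := IntermediateField.AdjoinSimple.gen K (ζ ^ p ^ (k + 2))) hω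
  have hle : (p ^ (k + 2)).totient ≤ (p ^ (k + 1)).totient := by
    rw [← IsCyclotomicExtension.finrank E (hirr k)]
    simpa using IsPrimitiveRoot.lcm_totient_le_finrank hθ hθ (by simpa using hirr (k + 1))
  rw [Nat.totient_prime_pow_succ hp.out, Nat.totient_prime_pow_succ hp.out] at hle
  exact (Nat.pow_lt_pow_right hp.out.one_lt k.lt_succ_self).not_ge
    (Nat.le_of_mul_le_mul_right hle (Nat.sub_pos_of_lt hp.out.one_lt))

theorem irreducible_expand_of_dvd_cyclotomic (hpP : (p : A) ∈ P) (hpP2 : (p : A) ∉ P ^ 2)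
    {n : ℕ} (hpn : p ∣ n) {F : K[X]} (hmonic : F.Monic) (hirr : Irreducible F)
    (hdvd : F ∣ cyclotomic n K) : Irreducible (expand K p F) := by
  have : CharZero A := charZero_of_natCast_notMem_sq hpP hpP2
  have : CharZero K := charZero_of_injective_algebraMap (IsFractionRing.injective A K)
  have : NeZero n :=
    ⟨by rintro rfl; exact hirr.not_isUnit (isUnit_of_dvd_one (by simpa using hdvd))⟩
  rw [expand_eq_comp_X_pow]
  refine irreducible_comp hmonic (monic_X_pow p) hirr fun E _ _ x hx ↦ ?_
  rw [Polynomial.map_pow, map_X]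
  refine X_pow_sub_C_irreducible_of_prime hp.out fun b hb ↦ ?_
  have : CharZero E := charZero_of_injective_algebraMap (algebraMap K E).injective
  have hx0 : aeval x (cyclotomic n K) = 0 :=
    aeval_eq_zero_of_dvd_aeval_eq_zero hdvd (hx ▸ minpoly.aeval K x)
  have hxn : IsPrimitiveRoot x n := by
    rwa [← isRoot_cyclotomic_iff, IsRoot.def, ← map_cyclotomic n (algebraMap K E),
      eval_map_algebraMap]
  have : IsCyclotomicExtension {n} K K⟮x⟯ := isCyclotomicExtension_adjoin_simple K hxn
  have hbn : IsPrimitiveRoot (b ^ p) n := by rwa [hb, ← IsPrimitiveRoot.coe_submonoidClass_iff]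
  exact not_isPrimitiveRoot_mul_of_isCyclotomicExtension K hpP hpP2 hpn b
    (isPrimitiveRoot_mul_of_pow_of_dvd hp.out.ne_zero hpn hbn)

theorem expand_irreducible_factor_cyclotomic_of_dvd_general (hpP : (p : A) ∈ P)
    (hpP2 : (p : A) ∉ P ^ 2) {n : ℕ} (hpn : p ∣ n) {F : K[X]} (hirr : Irreducible F)
    (hdvd : F ∣ cyclotomic n K) :
    Irreducible (expand K p F) ∧ expand K p F ∣ cyclotomic (n * p) K := by
  refine ⟨?_, cyclotomic_expand_eq_cyclotomic hp.out hpn K ▸ _root_.map_dvd (expand K p) hdvd⟩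
  have hmonic : (F * C F.leadingCoeff⁻¹).Monic := monic_mul_leadingCoeff_inv hirr.ne_zero
  have hunit : IsUnit (C F.leadingCoeff⁻¹) :=
    isUnit_C.2 (inv_ne_zero (leadingCoeff_ne_zero.2 hirr.ne_zero)).isUnit
  have hexpand := irreducible_expand_of_dvd_cyclotomic K hpP hpP2 hpn hmonic
    ((irreducible_mul_isUnit hunit).2 hirr) (hunit.mul_right_dvd.2 hdvd)
  rwa [map_mul, expand_C, irreducible_mul_isUnit hunit] at hexpand

end CyclotomicTower

/-- Let `p` be a prime and `n ≥ 1` with `p ∣ n`. If `F` is a monic irreducible factor of the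
`n`-th cyclotomic polynomial over `ℚ_p`, then `F(X^p)` is irreducible over `ℚ_p` and divides
the `np`-th cyclotomic polynomial. -/
theorem expand_irreducible_factor_cyclotomic_of_dvd
    (p : ℕ) [Fact p.Prime] (n : ℕ) (hn : 1 ≤ n) (hpn : p ∣ n)
    (F : Polynomial ℚ_[p]) (hmonic : F.Monic) (hirr : Irreducible F)
    (hdvd : F ∣ cyclotomic n ℚ_[p]) :
    Irreducible (expand ℚ_[p] p F) ∧
      expand ℚ_[p] p F ∣ cyclotomic (n * p) ℚ_[p] := by
  have hspan := PadicInt.maximalIdeal_eq_span_p (p := p)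
  have hmem : (p : ℤ_[p]) ∈ IsLocalRing.maximalIdeal ℤ_[p] := by simp [hspan]
  have hsq : (p : ℤ_[p]) ∉ IsLocalRing.maximalIdeal ℤ_[p] ^ 2 := by
    rw [hspan, Ideal.span_singleton_pow, Ideal.mem_span_singleton, pow_two]
    exact fun h ↦ PadicInt.prime_p.not_isUnit (PadicInt.irreducible_p.squarefree _ h)
  exact expand_irreducible_factor_cyclotomic_of_dvd_general ℚ_[p] hmem hsq hpn hirr hdvd
end

section
/- Let p be a prime number and n ≥ 1 an integer with p ∤ n. If F ∈ ℚ_p[X] is a monic irreducible factor of the n-th cyclotomic polynomial Φ_n over ℚ_p, then F(X) divides F(X^p) in ℚ_p[X], and the quotient polynomial F(X^p)/F(X) is irreducible in ℚ_p[X] and divides the (np)-th cyclotomic polynomial Φ_{np}. -/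
open Polynomial

/-!
By Gauss's lemma it suffices to work over `ℤ_p`. Let `Φ_n = G H` with `G` monic irreducible.
Lifting idempotents shows that the reduction `g` of `G` modulo `p` is irreducible: a coprime
factorization of `g` would give a nontrivial idempotent of the domain `ℤ_p[X]/(G)`.

Since `A(X^p) ≡ A(X)^p` modulo `p` for `A ∈ ℤ_p[X]` and `Φ_n` is separable modulo `p`, the prime
`G` divides `Φ_n(X^p) = Φ_{np} Φ_n` through its factor `G(X^p)`; write `G(X^p) = G Q`. Then
`Q ≡ g^(p-1)` modulo `p`, and `Q` is irreducible by the generalized Eisenstein criterion, provided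
the remainder of `Q` modulo `G` is nonzero modulo `p²`. Otherwise, differentiating `G(X^p) = G Q`
and cancelling `p` shows that `g` divides `g'(X)^p X^(p-1)`, which is absurd. Finally `Q` is prime,
it divides `Φ_{np} H`, and it cannot divide `H`.
-/

theorem isPrecomplete_of_moduleFinite {R : Type*} [CommRing R] (I : Ideal R) [IsPrecomplete I R]
    (M : Type*) [AddCommGroup M] [Module R M] [Module.Finite R M] : IsPrecomplete I M := by
  rw [← AdicCompletion.of_surjective_iff]
  intro y
  obtain ⟨t, rfl⟩ := AdicCompletion.ofTensorProduct_surjective_of_finite I M y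
  induction t with
  | zero => exact ⟨0, by simp only [map_zero]⟩
  | add s t hs ht =>
    obtain ⟨x, hx⟩ := hs
    obtain ⟨z, hz⟩ := ht
    exact ⟨x + z, by rw [map_add, map_add, hx, hz]⟩
  | tmul r x =>
    obtain ⟨r, rfl⟩ := AdicCompletion.of_surjective I R r
    refine ⟨r • x, ?_⟩
    rw [AdicCompletion.ofTensorProduct_tmul, map_smul]
    exact algebra_compatible_smul (AdicCompletion I R) r (AdicCompletion.of I M x)

theorem isAdicComplete_of_moduleFinite {R : Type*} [CommRing R] [IsNoetherianRing R] (I : Ideal R)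
    [IsAdicComplete I R] (M : Type*) [AddCommGroup M] [Module R M] [Module.Finite R M] :
    IsAdicComplete I M where
  toIsHausdorff := .of_le_jacobson I M (IsAdicComplete.le_jacobson_bot I)
  toIsPrecomplete := isPrecomplete_of_moduleFinite I M

theorem exists_isIdempotentElem_mk_eq {A : Type*} [CommRing A] {I : Ideal A} [HenselianRing A I]
    {e : A ⧸ I} (he : IsIdempotentElem e) :
    ∃ a : A, IsIdempotentElem a ∧ Ideal.Quotient.mk I a = e := by
  obtain ⟨a₀, rfl⟩ := Ideal.Quotient.mk_surjective e
  have hroot : (X ^ 2 - X : A[X]).eval a₀ ∈ I := by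
    rw [← Ideal.Quotient.eq_zero_iff_mem]
    simpa [sq, sub_eq_zero] using he.eq
  have hderiv : (X ^ 2 - X : A[X]).derivative.eval a₀ = 2 * a₀ - 1 := by
    simp [one_add_one_eq_two]
  have hunit : IsUnit (Ideal.Quotient.mk I (2 * a₀ - 1)) := by
    refine .of_mul_eq_one (Ideal.Quotient.mk I (2 * a₀ - 1)) ?_
    simp only [map_sub, map_mul, map_one, map_ofNat]
    linear_combination 4 * he.eq
  obtain ⟨a, ha, haI⟩ :=
    HenselianRing.is_henselian (X ^ 2 - X) (by monicity!) a₀ hroot (hderiv ▸ hunit)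
  refine ⟨a, ?_, Ideal.Quotient.eq.2 haI⟩
  simpa [IsIdempotentElem, sq, sub_eq_zero] using ha

theorem isUnit_or_isUnit_of_isCoprime_of_isIdempotentElem {S : Type*} [CommRing S] {a b : S}
    (hab : IsCoprime a b)
    (hidem : ∀ e : S ⧸ Ideal.span {a * b}, IsIdempotentElem e → e = 0 ∨ e = 1) :
    IsUnit a ∨ IsUnit b := by
  obtain ⟨u, v, huv⟩ := hab
  have hidem_ua : IsIdempotentElem (Ideal.Quotient.mk (Ideal.span {a * b}) (u * a)) := by
    rw [IsIdempotentElem, ← map_mul, Ideal.Quotient.eq, Ideal.mem_span_singleton]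
    exact ⟨-(u * v), by linear_combination u * a * huv⟩
  rcases hidem _ hidem_ua with h | h
  · rw [Ideal.Quotient.eq_zero_iff_dvd] at h
    have hb : b ∣ u * a := (dvd_mul_left b a).trans h
    exact .inr (isUnit_of_dvd_one (huv ▸ dvd_add hb (dvd_mul_left b v)))
  · rw [← map_one (Ideal.Quotient.mk _), Ideal.Quotient.eq, Ideal.mem_span_singleton] at h
    have ha : a ∣ u * a - 1 := (dvd_mul_right a b).trans h
    exact .inl (isUnit_of_dvd_one ((dvd_sub_right (dvd_mul_left a u)).1 ha))

theorem isUnit_or_isUnit_of_isCoprime_of_map_mk_eq_mul {R : Type*} [CommRing R]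
    [IsNoetherianRing R] {I : Ideal R} [IsAdicComplete I R] {G : R[X]} (hmonic : G.Monic)
    (hprime : Prime G) {a b : (R ⧸ I)[X]} (hcop : IsCoprime a b)
    (hGab : G.map (Ideal.Quotient.mk I) = a * b) : IsUnit a ∨ IsUnit b := by
  have : IsDomain (AdjoinRoot G) := AdjoinRoot.isDomain_of_prime hprime
  have : Module.Finite R (AdjoinRoot G) := hmonic.finite_adjoinRoot
  have : IsAdicComplete (I.map (AdjoinRoot.of G)) (AdjoinRoot G) :=
    (IsAdicComplete.map_algebraMap_iff (S := AdjoinRoot G) I (AdjoinRoot G)).2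
      (isAdicComplete_of_moduleFinite I (AdjoinRoot G))
  refine isUnit_or_isUnit_of_isCoprime_of_isIdempotentElem hcop ?_
  rw [← hGab]
  intro e he
  let θ := AdjoinRoot.quotEquivQuotMap G I
  obtain ⟨x, hx, hxe⟩ := exists_isIdempotentElem_mk_eq (he.map θ.symm)
  rcases IsIdempotentElem.iff_eq_zero_or_one.1 hx with rfl | rfl
  · exact .inl (θ.symm.injective (by rw [← hxe, map_zero, map_zero]))
  · exact .inr (θ.symm.injective (by rw [← hxe, map_one, map_one]))

theorem irreducible_map_of_squarefree_map {R K : Type*} [CommRing R] [IsNoetherianRing R] [Field K]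
    {φ : R →+* K} (hφ : Function.Surjective φ) [IsAdicComplete (RingHom.ker φ) R] {G : R[X]}
    (hmonic : G.Monic) (hprime : Prime G) (hsq : Squarefree (G.map φ)) :
    Irreducible (G.map φ) := by
  refine ⟨fun h ↦ hprime.not_isUnit ?_, fun a b hab ↦ ?_⟩
  · rw [hmonic.eq_one_of_map_eq_one φ ((hmonic.map φ).eq_one_of_isUnit h)]
    exact isUnit_one
  have hcop : IsCoprime a b := (squarefree_mul_iff.1 (hab ▸ hsq)).1.isCoprime
  let ε : K[X] ≃+* (R ⧸ RingHom.ker φ)[X] :=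
    mapEquiv (RingHom.quotientKerEquivOfSurjective hφ).symm
  have hG : G.map (Ideal.Quotient.mk (RingHom.ker φ)) = ε a * ε b := by
    rw [← map_mul, ← hab, mapEquiv_apply, Polynomial.map_map]
    congr 1
    ext x
    exact ((RingHom.quotientKerEquivOfSurjective hφ).symm_apply_apply (Ideal.Quotient.mk _ x)).symm
  simpa using isUnit_or_isUnit_of_isCoprime_of_map_mk_eq_mul hmonic hprime
    (hcop.map ε.toRingHom) hG

section CommRing

variable {R : Type*} [CommRing R]

theorem map_mk_span_singleton_eq_zero_iff {c : R} {f : R[X]} :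
    f.map (Ideal.Quotient.mk (Ideal.span {c})) = 0 ↔ C c ∣ f := by
  simp [Polynomial.ext_iff, C_dvd_iff_dvd_coeff, Ideal.Quotient.eq_zero_iff_dvd]

theorem dvd_of_dvd_C_mul [IsDomain R] {c : R} {G H : R[X]} (hc : c ≠ 0) (hG : G.Monic)
    (h : G ∣ C c * H) : G ∣ H := by
  rw [← modByMonic_eq_zero_iff_dvd hG] at h ⊢
  rw [← smul_eq_C_mul, smul_modByMonic] at h
  exact (smul_eq_zero_iff_right hc).1 h

theorem dvd_expand_derivative_mul_X_pow_sub [IsDomain R] {p : ℕ} {G Q T : R[X]}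
    (hp : (p : R) ≠ 0) (hG : G.Monic) (hQ : expand R p G = G * Q)
    (hQT : G ∣ Q - C ((p : R) ^ 2) * T) :
    G ∣ expand R p (derivative G) * X ^ (p - 1) - C (p : R) * (T * derivative G) := by
  obtain ⟨S, hS⟩ := hQT
  have hderiv : expand R p (derivative G) * (C (p : R) * X ^ (p - 1)) =
      derivative G * Q + G * derivative Q := by
    rw [← derivative_mul, ← hQ, derivative_expand, map_natCast]
  refine dvd_of_dvd_C_mul hp hG ⟨derivative Q + derivative G * S, ?_⟩
  rw [C_pow] at hS
  linear_combination hderiv + derivative G * hS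

end CommRing

theorem not_dvd_derivative_pow_mul_X_pow {K : Type*} [Field K] [PerfectField K] {g : K[X]}
    (hg : Irreducible g) (hgX : ¬g ∣ X) (m k : ℕ) : ¬g ∣ derivative g ^ m * X ^ k := by
  intro h
  rcases hg.prime.dvd_or_dvd h with h | h
  · have hsep : IsCoprime g (derivative g) := PerfectField.separable_of_irreducible hg
    exact hg.not_isUnit (hsep.isUnit_of_dvd' dvd_rfl (hg.prime.dvd_of_dvd_pow h))
  · exact hgX (hg.prime.dvd_of_dvd_pow h)

section FrobeniusLift

variable {p : ℕ} [Fact p.Prime] {R : Type*} [CommRing R] (φ : R →+* ZMod p) {G H Q T : R[X]}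

theorem map_expand_zmod (A : R[X]) : (expand R p A).map φ = A.map φ ^ p := by
  rw [map_expand, ZMod.expand_card]

variable {φ}

theorem dvd_expand_of_mul_dvd_expand (hprime : Prime G) (hG : ¬IsUnit (G.map φ))
    (hcop : IsCoprime (G.map φ) (H.map φ)) (hdvd : G * H ∣ expand R p (G * H)) :
    G ∣ expand R p G := by
  rw [map_mul] at hdvd
  refine (hprime.dvd_or_dvd (dvd_of_mul_right_dvd hdvd)).resolve_right fun h ↦ hG ?_
  have hmap : G.map φ ∣ H.map φ ^ p := map_expand_zmod φ H ▸ Polynomial.map_dvd φ h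
  exact hcop.pow_right.isUnit_of_dvd' dvd_rfl hmap

theorem map_eq_map_pow_of_expand_eq_mul (hG : G.map φ ≠ 0) (hQ : expand R p G = G * Q) :
    Q.map φ = G.map φ ^ (p - 1) := by
  apply mul_left_cancel₀ hG
  rw [← Polynomial.map_mul, ← hQ, map_expand_zmod, mul_pow_sub_one (NeZero.ne p)]

theorem dvd_of_expand_mul_eq_mul [IsDomain R] (hprime : Prime Q) (hG₀ : G.map φ ≠ 0)
    (hG : ¬IsUnit (G.map φ)) (hcop : IsCoprime (G.map φ) (H.map φ))
    (hQ : expand R p G = G * Q) (hT : expand R p (G * H) = T * (G * H)) : Q ∣ T := by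
  have hG_ne : G ≠ 0 := fun h ↦ hG₀ (by rw [h, Polynomial.map_zero])
  have hQTH : Q ∣ T * H := by
    refine ⟨expand R p H, mul_left_cancel₀ hG_ne ?_⟩
    rw [map_mul, hQ] at hT
    linear_combination -hT
  refine (hprime.dvd_or_dvd hQTH).resolve_right fun h ↦ hG ?_
  have hmap : G.map φ ^ (p - 1) ∣ H.map φ :=
    map_eq_map_pow_of_expand_eq_mul hG₀ hQ ▸ Polynomial.map_dvd φ h
  have hp : p - 1 ≠ 0 := Nat.sub_ne_zero_of_lt (Fact.out : p.Prime).one_lt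
  exact hcop.isUnit_of_dvd' dvd_rfl ((dvd_pow_self _ hp).trans hmap)

theorem not_C_sq_dvd_modByMonic [IsDomain R] (hp : (p : R) ≠ 0) (hG : G.Monic)
    (hirr : Irreducible (G.map φ)) (hX : ¬G.map φ ∣ X) (hQ : expand R p G = G * Q) :
    ¬C ((p : R) ^ 2) ∣ Q %ₘ G := by
  rintro ⟨T, hT⟩
  have hQT : G ∣ Q - C ((p : R) ^ 2) * T :=
    ⟨Q /ₘ G, by rw [← hT, sub_eq_iff_eq_add', modByMonic_add_div]⟩
  have hmap := Polynomial.map_dvd φ (dvd_expand_derivative_mul_X_pow_sub hp hG hQ hQT)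
  refine not_dvd_derivative_pow_mul_X_pow hirr hX p (p - 1) ?_
  simpa [map_expand_zmod, derivative_map] using hmap

theorem irreducible_of_expand_eq_mul [IsDomain R] (hker : RingHom.ker φ = Ideal.span {(p : R)})
    (hp : (p : R) ≠ 0) (hG : G.Monic) (hirr : Irreducible (G.map φ)) (hX : ¬G.map φ ∣ X)
    (hQ : expand R p G = G * Q) : Irreducible Q := by
  have hpos : 0 < p := NeZero.pos p
  have hmonic : Q.Monic := hG.of_mul_monic_left (hQ ▸ hG.expand hpos)
  have hmap : Q.map φ = G.map φ ^ (p - 1) := map_eq_map_pow_of_expand_eq_mul hirr.ne_zero hQ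
  have hdeg : 0 < Q.natDegree := by
    rw [← hmonic.natDegree_map φ, hmap, natDegree_pow]
    exact Nat.mul_pos (Nat.sub_pos_of_lt (Fact.out : p.Prime).one_lt) hirr.natDegree_pos
  algebraize [φ]
  refine generalizedEisenstein (K := ZMod p) (q := G) (p := p - 1) hirr hG hmonic.isPrimitive hdeg
    ?_ ?_ ?_
  · rw [hmonic.leadingCoeff, map_one]
    exact one_ne_zero
  · rw [hmonic.leadingCoeff, map_one, C_1, one_mul]
    exact hmap
  · rw [show RingHom.ker (algebraMap R (ZMod p)) = Ideal.span {(p : R)} from hker,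
      Ideal.span_singleton_pow, Ne, map_mk_span_singleton_eq_zero_iff]
    exact not_C_sq_dvd_modByMonic hp hG hirr hX hQ

end FrobeniusLift

theorem not_dvd_X_of_dvd_cyclotomic {R : Type*} [CommRing R] {n : ℕ} (hn : n ≠ 0) {g : R[X]}
    (hg : ¬IsUnit g) (hdvd : g ∣ cyclotomic n R) : ¬g ∣ X := by
  intro hX
  have hX1 : g ∣ X ^ n - 1 := hdvd.trans (cyclotomic.dvd_X_pow_sub_one n R)
  exact hg (isUnit_of_dvd_one ((dvd_sub_right (hX.trans (dvd_pow_self X hn))).1 hX1))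

theorem exists_monic_irreducible_dvd_map_eq {R K : Type*} [CommRing R] [IsDomain R]
    [IsIntegrallyClosed R] [Field K] [Algebra R K] [IsFractionRing R K] {f : R[X]} (hf : f.Monic)
    {F : K[X]} (hmonic : F.Monic) (hirr : Irreducible F) (hdvd : F ∣ f.map (algebraMap R K)) :
    ∃ G : R[X], G.Monic ∧ Irreducible G ∧ G ∣ f ∧ G.map (algebraMap R K) = F := by
  obtain ⟨G, hGF⟩ := IsIntegrallyClosed.eq_map_mul_C_of_dvd K hf hdvd
  rw [hmonic.leadingCoeff, C_1, mul_one] at hGF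
  subst hGF
  have hG : G.Monic := monic_of_injective (IsFractionRing.injective R K) hmonic
  exact ⟨G, hG, (hG.irreducible_iff_irreducible_map_fraction_map (K := K)).2 hirr,
    (hf.dvd_iff_fraction_map_dvd_fraction_map (K := K) hG).1 hdvd, rfl⟩

section PadicInt

variable {p n : ℕ} [Fact p.Prime] {G : ℤ_[p][X]}

theorem separable_cyclotomic_zmod (hpn : ¬p ∣ n) : (cyclotomic n (ZMod p)).Separable := by
  have : NeZero (n : ZMod p) := ⟨by rwa [Ne, ZMod.natCast_eq_zero_iff]⟩
  exact separable_cyclotomic n (ZMod p)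

theorem irreducible_map_toZMod_of_dvd_cyclotomic (hpn : ¬p ∣ n) (hmonic : G.Monic)
    (hirr : Irreducible G) (hdvd : G ∣ cyclotomic n ℤ_[p]) :
    Irreducible (G.map (PadicInt.toZMod (p := p))) := by
  have : IsAdicComplete (RingHom.ker (PadicInt.toZMod (p := p))) ℤ_[p] := by
    rw [PadicInt.ker_toZMod]
    infer_instance
  have hdvd_map : G.map PadicInt.toZMod ∣ cyclotomic n (ZMod p) :=
    map_cyclotomic n (PadicInt.toZMod (p := p)) ▸ Polynomial.map_dvd _ hdvd
  exact irreducible_map_of_squarefree_map (ZMod.ringHom_surjective _) hmonic hirr.prime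
    ((separable_cyclotomic_zmod hpn).of_dvd hdvd_map).squarefree

theorem exists_expand_eq_mul_of_dvd_cyclotomic (hpn : ¬p ∣ n) (hmonic : G.Monic)
    (hirr : Irreducible G) (hdvd : G ∣ cyclotomic n ℤ_[p]) :
    ∃ Q : ℤ_[p][X], expand ℤ_[p] p G = G * Q ∧ Q.Monic ∧ Irreducible Q ∧
      Q ∣ cyclotomic (n * p) ℤ_[p] := by
  have hp : p.Prime := Fact.out
  have hn : n ≠ 0 := fun h ↦ hpn (h ▸ dvd_zero p)
  have hirr_map := irreducible_map_toZMod_of_dvd_cyclotomic hpn hmonic hirr hdvd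
  obtain ⟨H, hH⟩ := hdvd
  have hexpand : expand ℤ_[p] p (G * H) = cyclotomic (n * p) ℤ_[p] * (G * H) := by
    rw [← hH, cyclotomic_expand_eq_cyclotomic_mul hp hpn]
  have hH_map : cyclotomic n (ZMod p) = G.map PadicInt.toZMod * H.map PadicInt.toZMod := by
    rw [← Polynomial.map_mul, ← hH, map_cyclotomic]
  have hcop : IsCoprime (G.map (PadicInt.toZMod (p := p))) (H.map PadicInt.toZMod) :=
    (hH_map ▸ separable_cyclotomic_zmod hpn).isCoprime
  have hX : ¬G.map PadicInt.toZMod ∣ X :=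
    not_dvd_X_of_dvd_cyclotomic hn hirr_map.not_isUnit (Dvd.intro _ hH_map.symm)
  have hker : RingHom.ker (PadicInt.toZMod (p := p)) = Ideal.span {(p : ℤ_[p])} := by
    rw [PadicInt.ker_toZMod, PadicInt.maximalIdeal_eq_span_p]
  obtain ⟨Q, hQ⟩ : G ∣ expand ℤ_[p] p G :=
    dvd_expand_of_mul_dvd_expand hirr.prime hirr_map.not_isUnit hcop (Dvd.intro_left _ hexpand.symm)
  have hQ_irr : Irreducible Q :=
    irreducible_of_expand_eq_mul hker (Nat.cast_ne_zero.2 hp.ne_zero) hmonic hirr_map hX hQ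
  exact ⟨Q, hQ, hmonic.of_mul_monic_left (hQ ▸ hmonic.expand hp.pos), hQ_irr,
    dvd_of_expand_mul_eq_mul hQ_irr.prime hirr_map.ne_zero hirr_map.not_isUnit hcop hQ
      hexpand⟩

end PadicInt

/-- Let `p` be a prime and `n ≥ 1` with `p ∤ n`. If `F` is a monic irreducible factor of the
`n`-th cyclotomic polynomial over `ℚ_p`, then `F(X)` divides `F(X^p)`, and the quotient
`F(X^p)/F(X)` is irreducible over `ℚ_p` and divides the `np`-th cyclotomic polynomial. -/
theorem expand_div_irreducible_factor_cyclotomic_of_not_dvd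
    (p : ℕ) [Fact p.Prime] (n : ℕ) (hn : 1 ≤ n) (hpn : ¬ p ∣ n)
    (F : Polynomial ℚ_[p]) (hmonic : F.Monic) (hirr : Irreducible F)
    (hdvd : F ∣ cyclotomic n ℚ_[p]) :
    F ∣ expand ℚ_[p] p F ∧
      Irreducible (expand ℚ_[p] p F / F) ∧
      expand ℚ_[p] p F / F ∣ cyclotomic (n * p) ℚ_[p] := by
  rw [← map_cyclotomic n (algebraMap ℤ_[p] ℚ_[p])] at hdvd
  obtain ⟨G, hG_monic, hG_irr, hG_dvd, rfl⟩ :=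
    exists_monic_irreducible_dvd_map_eq (cyclotomic.monic n ℤ_[p]) hmonic hirr hdvd
  obtain ⟨Q, hQ, hQ_monic, hQ_irr, hQ_dvd⟩ :=
    exists_expand_eq_mul_of_dvd_cyclotomic hpn hG_monic hG_irr hG_dvd
  have hexpand : expand ℚ_[p] p (G.map (algebraMap ℤ_[p] ℚ_[p])) =
      G.map (algebraMap ℤ_[p] ℚ_[p]) * Q.map (algebraMap ℤ_[p] ℚ_[p]) := by
    rw [← map_expand, hQ, Polynomial.map_mul]
  rw [hexpand, mul_div_cancel_left₀ _ hirr.ne_zero]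
  refine ⟨dvd_mul_right _ _, ?_, ?_⟩
  · exact hQ_monic.irreducible_iff_irreducible_map_fraction_map.1 hQ_irr
  · exact map_cyclotomic (n * p) (algebraMap ℤ_[p] ℚ_[p]) ▸ Polynomial.map_dvd _ hQ_dvd
end
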